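/- arXiv:1711.09650 — 2 statements merged into one kernel-verified Lean document; each statement's English description precedes it below -/
import Mathlib

section
/- Let λ > 0 and let φ ∈ P^r satisfy φ' − λ φ − L̂(φ(t₁)) = L(1) on I. Then the L²(I)-norm of φ satisfies (∫_I φ(t)² dt)^{1/2} ≤ Υ(r, kλ) · k^{1/2}, where Υ(r, ϱ) = √(3/(2(2r+1)+ϱ)). In particular, the L²(I)-norm of φ tends to 0 as r → ∞, uniformly with respect to λ. -/
open Polynomial MeasureTheory intervalIntegral

/-- The rescaled Legendre polynomials on `[t₀, t₁]`: `K i` has degree `i`,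
`K i (t₁) = 1`, `K i (t₀) = (-1)^i`, and they are `L²(t₀,t₁)`-orthogonal with
`∫ K i ^ 2 = (t₁ - t₀)/(2 i + 1)`. -/
def IsLegendreBasis (t₀ t₁ : ℝ) (K : ℕ → Polynomial ℝ) : Prop :=
  (∀ i, (K i).natDegree = i) ∧ (∀ i, (K i).eval t₁ = 1) ∧
  (∀ i, (K i).eval t₀ = (-1 : ℝ) ^ i) ∧
  (∀ i j, (∫ t in t₀..t₁, (K i).eval t * (K j).eval t) =
    if i = j then (t₁ - t₀) / (2 * (i : ℝ) + 1) else 0)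

/-- The lifting operator `L(z) = (z/k) ∑_{i=0}^r (-1)^i (2i+1) K_i`. -/
noncomputable def Lop (t₀ t₁ : ℝ) (r : ℕ) (K : ℕ → Polynomial ℝ) (z : ℝ) : Polynomial ℝ :=
  Polynomial.C (z / (t₁ - t₀)) *
    ∑ i ∈ Finset.range (r + 1), Polynomial.C ((-1 : ℝ) ^ i * (2 * (i : ℝ) + 1)) * K i

/-- The endpoint lifting operator `L̂(z) = (z/k) ∑_{i=0}^r (2i+1) K_i`. -/
noncomputable def LopE (t₀ t₁ : ℝ) (r : ℕ) (K : ℕ → Polynomial ℝ) (z : ℝ) : Polynomial ℝ :=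
  Polynomial.C (z / (t₁ - t₀)) *
    ∑ i ∈ Finset.range (r + 1), Polynomial.C (2 * (i : ℝ) + 1) * K i

/-- The scalar dG operator `Γ_λ(v) = v' + L(v(t₀)) + λ v`. -/
noncomputable def Gam (t₀ t₁ : ℝ) (r : ℕ) (K : ℕ → Polynomial ℝ) (lam : ℝ)
    (v : Polynomial ℝ) : Polynomial ℝ :=
  Polynomial.derivative v + Lop t₀ t₁ r K (v.eval t₀) + Polynomial.C lam * v

/-- `Υ(r, ϱ) = √(3 / (2 (2 r + 1) + ϱ))`. -/
noncomputable def Upsilon (r : ℕ) (ρ : ℝ) : ℝ :=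
  Real.sqrt (3 / (2 * (2 * (r : ℝ) + 1) + ρ))

/-- Integration over `[a, b]` as a linear functional on real polynomials. -/
noncomputable def polyIntegral (a b : ℝ) : ℝ[X] →ₗ[ℝ] ℝ where
  toFun p := ∫ t in a..b, p.eval t
  map_add' p q := by
    simp only [eval_add]
    exact integral_add (p.continuous.intervalIntegrable _ _) (q.continuous.intervalIntegrable _ _)
  map_smul' c p := by simp

theorem polyIntegral_derivative (a b : ℝ) (p : ℝ[X]) :
    polyIntegral a b (derivative p) = p.eval b - p.eval a :=
  integral_eq_sub_of_hasDerivAt (fun t _ => p.hasDerivAt t)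
    ((derivative p).continuous.intervalIntegrable _ _)

theorem polyIntegral_mul_derivative (a b : ℝ) (p q : ℝ[X]) :
    polyIntegral a b (p * derivative q) =
      p.eval b * q.eval b - p.eval a * q.eval a - polyIntegral a b (derivative p * q) := by
  have h := polyIntegral_derivative a b (p * q)
  rw [derivative_mul, map_add, eval_mul, eval_mul] at h
  linarith

theorem polyIntegral_C_mul (a b c : ℝ) (p : ℝ[X]) :
    polyIntegral a b (C c * p) = c * polyIntegral a b p := by
  rw [← smul_eq_C_mul, map_smul, smul_eq_mul]

/-- A polynomial of degree at most `n` is a combination of `K 0, …, K n` if each `K i` has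
degree `i`. -/
theorem exists_eq_sum_of_natDegree_le {K : ℕ → ℝ[X]} (hdeg : ∀ i, (K i).natDegree = i)
    (hne : ∀ i, K i ≠ 0) (n : ℕ) (p : ℝ[X]) (hp : p.natDegree ≤ n) :
    ∃ a : ℕ → ℝ, p = ∑ i ∈ Finset.range (n + 1), C (a i) * K i := by
  have hlead (i : ℕ) : (K i).coeff i ≠ 0 := by
    have h := leadingCoeff_ne_zero.mpr (hne i)
    rwa [leadingCoeff, hdeg] at h
  induction n generalizing p with
  | zero =>
    refine ⟨fun _ => p.coeff 0 / (K 0).coeff 0, ?_⟩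
    rw [Finset.sum_range_one, eq_C_of_natDegree_le_zero (hdeg 0).le, ← C_mul, coeff_C_zero,
      div_mul_cancel₀ _ (hlead 0)]
    exact eq_C_of_natDegree_le_zero hp
  | succ n ih =>
    set c := p.coeff (n + 1) / (K (n + 1)).coeff (n + 1) with hc
    have hq : (p - C c * K (n + 1)).natDegree ≤ n := by
      rw [natDegree_le_iff_coeff_eq_zero]
      intro m hm
      rw [coeff_sub, coeff_C_mul]
      rcases (Nat.succ_le_of_lt hm).eq_or_lt with h | h
      · rw [← h, hc, Nat.succ_eq_add_one, div_mul_cancel₀ _ (hlead _), sub_self]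
      · rw [coeff_eq_zero_of_natDegree_lt (hp.trans_lt h),
          coeff_eq_zero_of_natDegree_lt ((hdeg _).trans_lt h), mul_zero, sub_zero]
    obtain ⟨a, ha⟩ := ih _ hq
    refine ⟨Function.update a (n + 1) c, ?_⟩
    rw [Finset.sum_range_succ, Function.update_self, ← sub_eq_iff_eq_add, ha]
    refine Finset.sum_congr rfl fun i hi => ?_
    rw [Function.update_of_ne (by have := Finset.mem_range.mp hi; omega)]

namespace IsLegendreBasis

variable {t₀ t₁ : ℝ} {K : ℕ → ℝ[X]}

theorem exists_eq_sum (hK : IsLegendreBasis t₀ t₁ K) (n : ℕ) (p : ℝ[X]) (hp : p.natDegree ≤ n) :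
    ∃ a : ℕ → ℝ, p = ∑ i ∈ Finset.range (n + 1), C (a i) * K i :=
  exists_eq_sum_of_natDegree_le hK.1
    (fun i h => by simpa [h] using hK.2.1 i) n p hp

theorem polyIntegral_mul (hK : IsLegendreBasis t₀ t₁ K) (i j : ℕ) :
    polyIntegral t₀ t₁ (K i * K j) = if i = j then (t₁ - t₀) / (2 * (i : ℝ) + 1) else 0 := by
  rw [← hK.2.2.2 i j]
  simp [polyIntegral]

theorem polyIntegral_sum_mul (hK : IsLegendreBasis t₀ t₁ K) (a : ℕ → ℝ) {n j : ℕ} (hj : j ≤ n) :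
    polyIntegral t₀ t₁ ((∑ i ∈ Finset.range (n + 1), C (a i) * K i) * K j) =
      a j * ((t₁ - t₀) / (2 * (j : ℝ) + 1)) := by
  rw [Finset.sum_mul, map_sum, Finset.sum_eq_single_of_mem j (Finset.mem_range.mpr (by omega))]
  · rw [mul_assoc, polyIntegral_C_mul, hK.polyIntegral_mul, if_pos rfl]
  · intro i _ hij
    rw [mul_assoc, polyIntegral_C_mul, hK.polyIntegral_mul, if_neg hij, mul_zero]

theorem polyIntegral_mul_eq_zero (hK : IsLegendreBasis t₀ t₁ K) {p : ℝ[X]} {n : ℕ}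
    (hp : p.natDegree < n) : polyIntegral t₀ t₁ (p * K n) = 0 := by
  obtain ⟨a, rfl⟩ := hK.exists_eq_sum (n - 1) p (by omega)
  rw [Finset.sum_mul, map_sum]
  refine Finset.sum_eq_zero fun i hi => ?_
  have := Finset.mem_range.mp hi
  rw [mul_assoc, polyIntegral_C_mul, hK.polyIntegral_mul, if_neg (by omega), mul_zero]

theorem eq_zero_of_polyIntegral_mul (ht : t₀ < t₁) (hK : IsLegendreBasis t₀ t₁ K) {p : ℝ[X]}
    {n : ℕ} (hp : p.natDegree ≤ n) (h : ∀ j ≤ n, polyIntegral t₀ t₁ (p * K j) = 0) : p = 0 := by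
  obtain ⟨a, rfl⟩ := hK.exists_eq_sum n p hp
  refine Finset.sum_eq_zero fun j hj => ?_
  have hjn : j ≤ n := by have := Finset.mem_range.mp hj; omega
  have h0 := h j hjn
  have hpos : 0 < (t₁ - t₀) / (2 * (j : ℝ) + 1) := div_pos (sub_pos.mpr ht) (by positivity)
  rw [hK.polyIntegral_sum_mul a hjn, mul_eq_zero, or_iff_left hpos.ne'] at h0
  rw [h0, C_0, zero_mul]

/-- A combination of `K 0, …, K r` that represents a linear functional on each `K j`
represents it on all polynomials of degree at most `r`. -/
theorem polyIntegral_mul_eq_of_basis (hK : IsLegendreBasis t₀ t₁ K) {r : ℕ} {p : ℝ[X]}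
    (F : ℝ[X] →ₗ[ℝ] ℝ) (h : ∀ j ≤ r, polyIntegral t₀ t₁ (p * K j) = F (K j)) {V : ℝ[X]}
    (hV : V.natDegree ≤ r) : polyIntegral t₀ t₁ (p * V) = F V := by
  obtain ⟨a, rfl⟩ := hK.exists_eq_sum r V hV
  rw [Finset.mul_sum, map_sum, map_sum]
  refine Finset.sum_congr rfl fun j hj => ?_
  have := Finset.mem_range.mp hj
  rw [mul_left_comm, polyIntegral_C_mul, h j (by omega), ← smul_eq_C_mul, map_smul, smul_eq_mul]

theorem polyIntegral_Lop_mul (ht : t₀ < t₁) (hK : IsLegendreBasis t₀ t₁ K) {r : ℕ} (z : ℝ)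
    {V : ℝ[X]} (hV : V.natDegree ≤ r) :
    polyIntegral t₀ t₁ (Lop t₀ t₁ r K z * V) = z * V.eval t₀ := by
  refine hK.polyIntegral_mul_eq_of_basis (z • leval t₀) (fun j hj => ?_) hV
  have hk : t₁ - t₀ ≠ 0 := (sub_pos.mpr ht).ne'
  have hj' : (2 * (j : ℝ) + 1) ≠ 0 := by positivity
  rw [Lop, mul_assoc, polyIntegral_C_mul, hK.polyIntegral_sum_mul _ hj, LinearMap.smul_apply,
    leval_apply, hK.2.2.1, smul_eq_mul]
  field_simp

theorem polyIntegral_LopE_mul (ht : t₀ < t₁) (hK : IsLegendreBasis t₀ t₁ K) {r : ℕ} (z : ℝ)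
    {V : ℝ[X]} (hV : V.natDegree ≤ r) :
    polyIntegral t₀ t₁ (LopE t₀ t₁ r K z * V) = z * V.eval t₁ := by
  refine hK.polyIntegral_mul_eq_of_basis (z • leval t₁) (fun j hj => ?_) hV
  have hk : t₁ - t₀ ≠ 0 := (sub_pos.mpr ht).ne'
  have hj' : (2 * (j : ℝ) + 1) ≠ 0 := by positivity
  rw [LopE, mul_assoc, polyIntegral_C_mul, hK.polyIntegral_sum_mul _ hj, LinearMap.smul_apply,
    leval_apply, hK.2.1, smul_eq_mul]
  field_simp

theorem zero_eq_one (hK : IsLegendreBasis t₀ t₁ K) : K 0 = 1 := by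
  have h := eq_C_of_natDegree_le_zero (hK.1 0).le
  have h1 := hK.2.1 0
  rw [h, eval_C] at h1
  rw [h, h1, C_1]

theorem derivative_one (ht : t₀ < t₁) (hK : IsLegendreBasis t₀ t₁ K) :
    derivative (K 1) = C (2 / (t₁ - t₀)) := by
  have hk : t₁ - t₀ ≠ 0 := (sub_pos.mpr ht).ne'
  have h := eq_C_of_natDegree_le_zero (p := derivative (K 1))
    ((natDegree_derivative_le _).trans (by rw [hK.1]))
  have h1 := polyIntegral_derivative t₀ t₁ (K 1)
  rw [h, hK.2.1, hK.2.2.1] at h1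
  simp only [polyIntegral, LinearMap.coe_mk, AddHom.coe_mk, eval_C,
    intervalIntegral.integral_const, smul_eq_mul, pow_one] at h1
  rw [h, eq_div_of_mul_eq (a := (derivative (K 1)).coeff 0) (b := 2) hk (by linarith)]

theorem derivative_sub (ht : t₀ < t₁) (hK : IsLegendreBasis t₀ t₁ K) (n : ℕ) :
    derivative (K (n + 2) - K n) = C (2 * (2 * (n : ℝ) + 3) / (t₁ - t₀)) * K (n + 1) := by
  have hk : t₁ - t₀ ≠ 0 := (sub_pos.mpr ht).ne'
  have hd (i : ℕ) : (derivative (K i)).natDegree ≤ i - 1 :=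
    (natDegree_derivative_le _).trans (by rw [hK.1])
  rw [← sub_eq_zero]
  refine hK.eq_zero_of_polyIntegral_mul ht (n := n + 1) ?_ fun j hj => ?_
  · refine (natDegree_sub_le _ _).trans (max_le ?_ <| (natDegree_C_mul_le _ _).trans (hK.1 _).le)
    refine (natDegree_derivative_le _).trans (Nat.sub_le_of_le_add ?_)
    exact (natDegree_sub_le _ _).trans (max_le (hK.1 _).le ((hK.1 _).le.trans (by omega)))
  · rw [sub_mul, map_sub, mul_comm (derivative _), polyIntegral_mul_derivative, mul_sub, map_sub,
      hK.polyIntegral_mul_eq_zero ((hd j).trans_lt (by omega)), mul_assoc, polyIntegral_C_mul,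
      hK.polyIntegral_mul]
    simp only [eval_sub, hK.2.1, hK.2.2.1, pow_add]
    rcases hj.eq_or_lt with rfl | hj
    · have h := polyIntegral_mul_derivative t₀ t₁ (K n) (K (n + 1))
      rw [hK.polyIntegral_mul_eq_zero ((hd n).trans_lt (by omega)), mul_comm (K n)] at h
      have hsq : ((-1 : ℝ) ^ n) * (-1) ^ n = 1 := by rw [← mul_pow]; norm_num
      have hn : (2 * (n : ℝ) + 3) ≠ 0 := by positivity
      rw [h, if_pos rfl]
      simp only [hK.2.1, hK.2.2.1, pow_succ]
      push_cast
      have : (2 * ((n : ℝ) + 1) + 1) ≠ 0 := by positivity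
      field_simp
      linear_combination (2 * (n : ℝ) + 3) * hsq
    · rw [if_neg (by omega)]
      have h0 : polyIntegral t₀ t₁ (derivative (K j) * K n) = 0 := by
        rcases Nat.eq_zero_or_pos j with rfl | hj0
        · rw [hK.zero_eq_one, Polynomial.derivative_one, zero_mul, map_zero]
        · exact hK.polyIntegral_mul_eq_zero ((hd j).trans_lt (by omega))
      rw [h0]
      ring

/-- The tested form of the dual problem. -/
theorem dual_weak (ht : t₀ < t₁) (hK : IsLegendreBasis t₀ t₁ K) {r : ℕ} {lam : ℝ} {φ : ℝ[X]}
    (hφ : derivative φ - C lam * φ - LopE t₀ t₁ r K (φ.eval t₁) = Lop t₀ t₁ r K 1)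
    {V : ℝ[X]} (hV : V.natDegree ≤ r) :
    polyIntegral t₀ t₁ (derivative φ * V) - lam * polyIntegral t₀ t₁ (φ * V)
      - φ.eval t₁ * V.eval t₁ = V.eval t₀ := by
  have h := hK.polyIntegral_Lop_mul ht 1 hV
  rwa [← hφ, sub_mul, sub_mul, map_sub, map_sub, mul_assoc, polyIntegral_C_mul,
    hK.polyIntegral_LopE_mul ht _ hV, one_mul] at h

/-- Consecutive Legendre moments of the dual solution have opposite signs. -/
theorem dual_moment_mul_nonpos (ht : t₀ < t₁) (hK : IsLegendreBasis t₀ t₁ K) {r : ℕ} {lam : ℝ}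
    (hlam : 0 < lam) {φ : ℝ[X]}
    (hφ : derivative φ - C lam * φ - LopE t₀ t₁ r K (φ.eval t₁) = Lop t₀ t₁ r K 1)
    (j : ℕ) (hj : j + 1 ≤ r) :
    polyIntegral t₀ t₁ (φ * K j) * polyIntegral t₀ t₁ (φ * K (j + 1)) ≤ 0 := by
  have hk : 0 < t₁ - t₀ := sub_pos.mpr ht
  have weak {V : ℝ[X]} (hV : V.natDegree ≤ r) :
      polyIntegral t₀ t₁ (φ * derivative V) + lam * polyIntegral t₀ t₁ (φ * V)
        = -(1 + φ.eval t₀) * V.eval t₀ := by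
    linear_combination -hK.dual_weak ht hφ hV + polyIntegral_mul_derivative t₀ t₁ φ V
  induction j with
  | zero =>
    have h0 := weak (V := K 0) (by rw [hK.1]; omega)
    have h1 := weak (V := K 1) (by rw [hK.1]; omega)
    rw [hK.2.2.1, hK.zero_eq_one, Polynomial.derivative_one, mul_zero, map_zero] at h0
    rw [hK.2.2.1, hK.derivative_one ht, mul_comm φ, polyIntegral_C_mul] at h1
    rw [hK.zero_eq_one]
    rw [mul_one] at h0 ⊢
    set x := polyIntegral t₀ t₁ φ
    set y := polyIntegral t₀ t₁ (φ * K (0 + 1))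
    have key : lam * (x * y) = -((2 / (t₁ - t₀) + lam) * x ^ 2) := by
      linear_combination x * h1 + x * h0
    have : 0 ≤ (2 / (t₁ - t₀) + lam) * x ^ 2 := by positivity
    exact nonpos_of_mul_nonpos_right (by linarith) hlam
  | succ j ih =>
    have h := weak (V := K (j + 2) - K j)
      ((natDegree_sub_le _ _).trans
        (max_le ((hK.1 _).le.trans hj) ((hK.1 _).le.trans (by omega))))
    rw [hK.derivative_sub ht, mul_left_comm, polyIntegral_C_mul, mul_sub, map_sub, eval_sub,
      hK.2.2.1, hK.2.2.1, pow_add] at h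
    have hi := ih (by omega)
    set x := polyIntegral t₀ t₁ (φ * K j)
    set y := polyIntegral t₀ t₁ (φ * K (j + 1))
    set z := polyIntegral t₀ t₁ (φ * K (j + 1 + 1))
    have key : lam * (y * z) = lam * (x * y) - 2 * (2 * (j : ℝ) + 3) / (t₁ - t₀) * y ^ 2 := by
      linear_combination y * h
    have h1 : 0 ≤ 2 * (2 * (j : ℝ) + 3) / (t₁ - t₀) * y ^ 2 := by positivity
    have h2 : lam * (x * y) ≤ 0 := mul_nonpos_of_nonneg_of_nonpos hlam.le hi
    exact nonpos_of_mul_nonpos_right (by linarith) hlam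

/-- Bound for the (signed) leading Legendre moment of the dual solution. -/
theorem dual_leading_moment (ht : t₀ < t₁) (hK : IsLegendreBasis t₀ t₁ K) {r : ℕ} {lam : ℝ}
    (hlam : 0 < lam) {φ : ℝ[X]} (hφdeg : φ.natDegree ≤ r)
    (hφ : derivative φ - C lam * φ - LopE t₀ t₁ r K (φ.eval t₁) = Lop t₀ t₁ r K 1) :
    -((-1) ^ r * polyIntegral t₀ t₁ (φ * K r)) * (2 * (2 * (r : ℝ) + 1) + (t₁ - t₀) * lam)
      ≤ 2 * (t₁ - t₀) := by
  have hk : 0 < t₁ - t₀ := sub_pos.mpr ht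
  rcases r with _ | n
  · have h := hK.dual_weak ht hφ (V := K 0) (hK.1 0).le
    have hc := eq_C_of_natDegree_le_zero hφdeg
    rw [hK.zero_eq_one] at h ⊢
    rw [hc] at h ⊢
    simp [polyIntegral] at h ⊢
    set c := φ.coeff 0
    have hc0 : c ≤ 0 := by
      by_contra! h0
      have : 0 < lam * ((t₁ - t₀) * c) := by positivity
      linarith
    have h1 : (t₁ - t₀) * ((t₁ - t₀) * lam) * c ≤ 0 :=
      mul_nonpos_of_nonneg_of_nonpos (by positivity) hc0
    linear_combination h1 + 2 * (t₁ - t₀) * h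
  · have hd : (derivative φ).natDegree ≤ n := (natDegree_derivative_le _).trans (by omega)
    have h1 := hK.dual_weak ht hφ (V := K (n + 1)) (hK.1 _).le
    have h2 := hK.dual_weak ht hφ (V := K n) ((hK.1 _).le.trans (by omega))
    have h3 := polyIntegral_mul_derivative t₀ t₁ φ (K (n + 2) - K n)
    rw [hK.polyIntegral_mul_eq_zero (n := n + 1) (by omega), hK.2.1, hK.2.2.1] at h1
    rw [hK.2.1, hK.2.2.1] at h2
    rw [hK.derivative_sub ht, mul_left_comm, polyIntegral_C_mul, mul_sub, map_sub, eval_sub,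
      eval_sub, hK.2.2.1, hK.2.2.1, hK.2.1, hK.2.1,
      hK.polyIntegral_mul_eq_zero (p := derivative φ) (n := n + 2) (by omega)] at h3
    have h4 := hK.dual_moment_mul_nonpos ht hlam hφ n le_rfl
    set x := polyIntegral t₀ t₁ (φ * K n)
    set y := polyIntegral t₀ t₁ (φ * K (n + 1))
    have hsq : ((-1 : ℝ) ^ n) * (-1) ^ n = 1 := by rw [← mul_pow]; norm_num
    have e : 2 * (2 * (n : ℝ) + 3) / (t₁ - t₀) * y - lam * x + lam * y = 2 * (-1) ^ n := by
      linear_combination h3 + h2 - h1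
    have e' : (2 * (2 * (n : ℝ) + 3) + (t₁ - t₀) * lam) * y - (t₁ - t₀) * lam * x
        = 2 * (t₁ - t₀) * (-1) ^ n := by
      field_simp at e
      linear_combination e
    set w := (-1 : ℝ) ^ n * y with hw
    have hwy : w ^ 2 = y ^ 2 := by rw [hw]; linear_combination y ^ 2 * hsq
    have hM : 0 < 2 * (2 * (n : ℝ) + 3) + (t₁ - t₀) * lam := by positivity
    have key : (2 * (2 * (n : ℝ) + 3) + (t₁ - t₀) * lam) * w ^ 2 ≤ 2 * (t₁ - t₀) * w := by
      have : (t₁ - t₀) * lam * (x * y) ≤ 0 := mul_nonpos_of_nonneg_of_nonpos (by positivity) h4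
      rw [hwy, hw]
      linear_combination y * e' + this
    have hw' : -((-1 : ℝ) ^ (n + 1) * y) = w := by rw [hw, pow_succ]; ring
    rw [hw']
    push_cast
    rcases le_or_gt w 0 with h0 | h0
    · nlinarith
    · have := le_of_mul_le_mul_right (a := w) (b := (2 * (2 * (n : ℝ) + 3) + (t₁ - t₀) * lam) * w)
        (c := 2 * (t₁ - t₀)) (by linarith) h0
      linarith

/-- The square of the `L²`-norm of the dual solution is at most `2k / (2(2r + 1) + kλ)`. -/
theorem dual_norm_sq_le (ht : t₀ < t₁) (hK : IsLegendreBasis t₀ t₁ K) {r : ℕ} {lam : ℝ}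
    (hlam : 0 < lam) {φ : ℝ[X]} (hφdeg : φ.natDegree ≤ r)
    (hφ : derivative φ - C lam * φ - LopE t₀ t₁ r K (φ.eval t₁) = Lop t₀ t₁ r K 1) :
    polyIntegral t₀ t₁ (φ * φ) ≤
      2 / (2 * (2 * (r : ℝ) + 1) + (t₁ - t₀) * lam) * (t₁ - t₀) := by
  have hk : 0 < t₁ - t₀ := sub_pos.mpr ht
  have hM : 0 < 2 * (2 * (r : ℝ) + 1) + (t₁ - t₀) * lam := by positivity
  have hu := hK.dual_leading_moment ht hlam hφdeg hφ
  have h1 := hK.dual_weak ht hφ (V := φ) hφdeg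
  have h2 := polyIntegral_mul_derivative t₀ t₁ φ φ
  have h3 := hK.dual_weak ht hφ (V := K r) (hK.1 _).le
  have hd : polyIntegral t₀ t₁ (derivative φ * K r) = 0 := by
    rcases Nat.eq_zero_or_pos r with rfl | hr
    · rw [eq_C_of_natDegree_le_zero hφdeg, derivative_C, zero_mul, map_zero]
    · exact hK.polyIntegral_mul_eq_zero
        ((natDegree_derivative_le _).trans_lt (by omega))
  rw [hd, hK.2.1, hK.2.2.1] at h3
  rw [mul_comm φ (derivative φ)] at h2
  set N := polyIntegral t₀ t₁ (φ * φ)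
  set y := polyIntegral t₀ t₁ (φ * K r)
  set u := -((-1 : ℝ) ^ r * y) with hu'
  have hsq : ((-1 : ℝ) ^ r) * (-1) ^ r = 1 := by rw [← mul_pow]; norm_num
  have hf : φ.eval t₁ ^ 2 = (lam * u - 1) ^ 2 := by
    have : (lam * u - 1) = (-1) ^ r * φ.eval t₁ := by
      rw [hu']; linear_combination (-1) ^ r * h3 + hsq
    rw [this, mul_pow, sq ((-1 : ℝ) ^ r), hsq, one_mul]
  have hN : lam * N ≤ lam * u := by
    nlinarith [sq_nonneg (1 + φ.eval t₀), sq_nonneg (lam * u)]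
  have hNu : N ≤ u := le_of_mul_le_mul_left hN hlam
  rw [div_mul_eq_mul_div, le_div_iff₀ hM]
  exact (mul_le_mul_of_nonneg_right hNu hM.le).trans hu

end IsLegendreBasis

/-- The `L²(I)`-bound `‖φ‖_{L²(I)} ≤ Υ(r, kλ) k^{1/2}` for the dG dual solution. -/
theorem stmt_8 (t₀ t₁ : ℝ) (ht : t₀ < t₁) (r : ℕ) (K : ℕ → Polynomial ℝ)
    (hK : IsLegendreBasis t₀ t₁ K) (lam : ℝ) (hlam : 0 < lam)
    (φ : Polynomial ℝ) (hφdeg : φ.natDegree ≤ r)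
    (hφ : Polynomial.derivative φ - Polynomial.C lam * φ - LopE t₀ t₁ r K (φ.eval t₁)
      = Lop t₀ t₁ r K 1) :
    Real.sqrt (∫ t in t₀..t₁, (φ.eval t) ^ 2)
      ≤ Upsilon r ((t₁ - t₀) * lam) * Real.sqrt (t₁ - t₀) := by
  have hk : 0 ≤ t₁ - t₀ := (sub_pos.mpr ht).le
  rw [Upsilon, ← Real.sqrt_mul (by positivity)]
  refine Real.sqrt_le_sqrt ?_
  have h := hK.dual_norm_sq_le ht hlam hφdeg hφ
  have e : polyIntegral t₀ t₁ (φ * φ) = ∫ t in t₀..t₁, (φ.eval t) ^ 2 := by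
    simp [polyIntegral, sq]
  rw [← e]
  refine h.trans ?_
  gcongr
  norm_num
end

section
/- Let λ > 0 and let ψ ∈ P^r satisfy Γ_λ(ψ) = L(1). Define the error function e(t) = exp(−λ(t−t₀)) − ψ(t) and η(t) = 1 − ∫_{t₀}^{t} exp(λ(s−t₀)) L(1)(s) ds. Then e(t₀) = 1 − ψ(t₀) > 0, and for all t ∈ I the identity exp(−λ(t−t₀)) η(t) = e(t)/e(t₀) holds. -/
open Polynomial MeasureTheory intervalIntegral

/-- The dG error function `e(t) = exp(-λ (t - t₀)) - ψ(t)`. -/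
noncomputable def errF (t₀ lam : ℝ) (ψ : Polynomial ℝ) (t : ℝ) : ℝ :=
  Real.exp (-lam * (t - t₀)) - ψ.eval t

/-- The Neumann sum for the resolvent equation `x φ' + φ = x p`. -/
noncomputable def resolventSum (p : Polynomial ℝ) (n : ℕ) (x : ℝ) : Polynomial ℝ :=
  ∑ j ∈ Finset.range n, C ((-1 : ℝ) ^ j * x ^ (j + 1)) * derivative^[j] p

lemma resolventSum_telescope (p : Polynomial ℝ) (n : ℕ) (x : ℝ) :
    C x * derivative (resolventSum p n x) + resolventSum p n x =
      C x * p - C ((-1 : ℝ) ^ n * x ^ (n + 1)) * derivative^[n] p := by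
  induction n with
  | zero => simp [resolventSum]
  | succ n ih =>
    have h : resolventSum p (n + 1) x =
        resolventSum p n x + C ((-1 : ℝ) ^ n * x ^ (n + 1)) * derivative^[n] p :=
      Finset.sum_range_succ _ _
    rw [h, derivative_add, derivative_C_mul, Function.iterate_succ_apply']
    simp only [C_mul, C_pow, C_neg, C_1] at ih ⊢
    linear_combination ih

lemma resolventSum_eq (p : Polynomial ℝ) {r : ℕ} (hp : p.natDegree ≤ r) (x : ℝ) :
    C x * derivative (resolventSum p (r + 1) x) + resolventSum p (r + 1) x = C x * p := by
  rw [resolventSum_telescope, iterate_derivative_eq_zero (by omega)]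
  simp

lemma natDegree_resolventSum_le (p : Polynomial ℝ) {r : ℕ} (hp : p.natDegree ≤ r) (n : ℕ) (x : ℝ) :
    (resolventSum p n x).natDegree ≤ r := by
  refine natDegree_sum_le_of_forall_le _ _ fun j _ => ?_
  refine (natDegree_C_mul_le _ _).trans ((natDegree_iterate_derivative p j).trans ?_)
  omega

lemma continuous_eval_resolventSum (p : Polynomial ℝ) (n : ℕ) (t : ℝ) :
    Continuous fun x => (resolventSum p n x).eval t := by
  simp only [resolventSum, eval_finsetSum, eval_mul, eval_C]
  fun_prop

lemma eval_resolventSum_zero (p : Polynomial ℝ) (n : ℕ) (t : ℝ) :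
    (resolventSum p n 0).eval t = 0 := by
  simp [resolventSum]

lemma eq_zero_of_derivative_add_C_mul {p : Polynomial ℝ} {c : ℝ} (hc : c ≠ 0)
    (h : derivative p + C c * p = 0) : p = 0 := by
  by_contra hp
  have h1 : (C c * p).degree = p.degree := degree_C_mul hc
  have h2 : C c * p = -derivative p := by linear_combination h
  rw [h2, degree_neg] at h1
  exact (degree_derivative_lt hp).ne h1

lemma Lop_eq_C_mul (t₀ t₁ : ℝ) (r : ℕ) (K : ℕ → Polynomial ℝ) (z : ℝ) :
    Lop t₀ t₁ r K z = C z * Lop t₀ t₁ r K 1 := by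
  rw [Lop, Lop, ← mul_assoc, ← C_mul, mul_one_div]

lemma intervalIntegrable_eval_mul (p q : Polynomial ℝ) (a b : ℝ) :
    IntervalIntegrable (fun t => p.eval t * q.eval t) volume a b :=
  (p.continuous.mul q.continuous).intervalIntegrable a b

lemma integral_eval_mul_derivative (p : Polynomial ℝ) (a b : ℝ) :
    ∫ t in a..b, p.eval t * (derivative p).eval t = (p.eval b ^ 2 - p.eval a ^ 2) / 2 := by
  have h : ∀ t ∈ Set.uIcc a b, HasDerivAt (fun t => p.eval t ^ 2 / 2)
      (p.eval t * (derivative p).eval t) t := fun t _ =>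
    (((p.hasDerivAt t).pow 2).div_const 2).congr_deriv (by norm_num; ring)
  rw [integral_eq_sub_of_hasDerivAt h (intervalIntegrable_eval_mul _ _ a b)]
  ring

section Legendre

variable {t₀ t₁ : ℝ} {K : ℕ → Polynomial ℝ}

lemma natDegree_Lop_le (hK : IsLegendreBasis t₀ t₁ K) (r : ℕ) (z : ℝ) :
    (Lop t₀ t₁ r K z).natDegree ≤ r := by
  refine (natDegree_C_mul_le _ _).trans (natDegree_sum_le_of_forall_le _ _ fun j hj => ?_)
  refine (natDegree_C_mul_le _ _).trans ?_
  rw [hK.1 j]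
  exact Nat.lt_succ_iff.1 (Finset.mem_range.1 hj)

lemma integral_Lop_mul_basis (ht : t₀ < t₁) (hK : IsLegendreBasis t₀ t₁ K) {r j : ℕ}
    (hj : j ≤ r) :
    ∫ t in t₀..t₁, (Lop t₀ t₁ r K 1).eval t * (K j).eval t = (K j).eval t₀ := by
  have h : ∀ t, (Lop t₀ t₁ r K 1).eval t * (K j).eval t =
      1 / (t₁ - t₀) * ∑ i ∈ Finset.range (r + 1),
        ((-1 : ℝ) ^ i * (2 * (i : ℝ) + 1)) * ((K i).eval t * (K j).eval t) := fun t => by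
    simp only [Lop, eval_mul, eval_C, eval_finsetSum, Finset.sum_mul, mul_assoc]
  simp only [h]
  rw [intervalIntegral.integral_const_mul,
    intervalIntegral.integral_finsetSum fun i _ => (intervalIntegrable_eval_mul _ _ _ _).const_mul _]
  simp only [intervalIntegral.integral_const_mul, hK.2.2.2, hK.2.2.1, mul_ite, mul_zero,
    Finset.sum_ite_eq', Finset.mem_range, Nat.lt_succ_of_le hj, if_true]
  have hk : t₁ - t₀ ≠ 0 := sub_ne_zero.2 ht.ne'
  have h2 : (2 * (j : ℝ) + 1) ≠ 0 := by positivity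
  field_simp

lemma integral_Lop_mul (ht : t₀ < t₁) (hK : IsLegendreBasis t₀ t₁ K) {r : ℕ}
    {p : Polynomial ℝ} (hp : p.natDegree ≤ r) :
    ∫ t in t₀..t₁, (Lop t₀ t₁ r K 1).eval t * p.eval t = p.eval t₀ := by
  suffices h : ∀ n ≤ r + 1, ∀ p : Polynomial ℝ, p.degree < n →
      ∫ t in t₀..t₁, (Lop t₀ t₁ r K 1).eval t * p.eval t = p.eval t₀ from
    h (r + 1) le_rfl p
      ((degree_le_natDegree).trans_lt (by exact_mod_cast Nat.lt_succ_of_le hp))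
  intro n
  induction n with
  | zero =>
    intro _ p hp
    have : p = 0 := by simpa using hp
    simp [this]
  | succ n ih =>
    intro hn p hp
    have hK0 : K n ≠ 0 := fun h => by simpa [h] using hK.2.1 n
    have hlc : (K n).coeff n ≠ 0 := by
      have := leadingCoeff_ne_zero.2 hK0
      rwa [leadingCoeff, hK.1 n] at this
    set c := p.coeff n / (K n).coeff n with hc
    have hq : (p - C c * K n).degree < n := by
      rw [degree_lt_iff_coeff_zero]
      intro m hm
      rcases hm.eq_or_lt with rfl | hm
      · rw [coeff_sub, coeff_C_mul, hc, div_mul_cancel₀ _ hlc, sub_self]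
      · rw [coeff_sub, coeff_C_mul, (degree_lt_iff_coeff_zero _ _).1 hp m hm,
          coeff_eq_zero_of_natDegree_lt (by rwa [hK.1 n])]
        simp
    have h1 := ih (by omega) _ hq
    have h2 := integral_Lop_mul_basis ht hK (show n ≤ r by omega)
    have hsplit : ∀ t, (Lop t₀ t₁ r K 1).eval t * p.eval t =
        (Lop t₀ t₁ r K 1).eval t * (p - C c * K n).eval t +
          c * ((Lop t₀ t₁ r K 1).eval t * (K n).eval t) := fun t => by
      simp only [eval_sub, eval_mul, eval_C]
      ring
    simp only [hsplit]
    rw [intervalIntegral.integral_add (intervalIntegrable_eval_mul _ _ _ _)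
      ((intervalIntegrable_eval_mul _ _ _ _).const_mul c),
      intervalIntegral.integral_const_mul, h1, h2]
    simp

lemma eval_left_ne_neg_one_of_resolvent (ht : t₀ < t₁) (hK : IsLegendreBasis t₀ t₁ K) {r : ℕ}
    {φ : Polynomial ℝ} (hφ : φ.natDegree ≤ r) {x : ℝ} (hx : 0 ≤ x)
    (h : C x * derivative φ + φ = C x * Lop t₀ t₁ r K 1) : φ.eval t₀ ≠ -1 := by
  intro h0
  have hx0 : x ≠ 0 := by
    rintro rfl
    have : φ = 0 := by simpa using h
    simp [this] at h0
  have hpt : ∀ t, φ.eval t * φ.eval t = x * ((Lop t₀ t₁ r K 1).eval t * φ.eval t) -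
      x * (φ.eval t * (derivative φ).eval t) := fun t => by
    have := congrArg (eval t) h
    simp only [eval_add, eval_mul, eval_C] at this
    linear_combination φ.eval t * this
  have hnn : 0 ≤ ∫ t in t₀..t₁, φ.eval t * φ.eval t :=
    intervalIntegral.integral_nonneg ht.le fun t _ => mul_self_nonneg _
  simp only [hpt] at hnn
  rw [intervalIntegral.integral_sub
      ((intervalIntegrable_eval_mul _ _ _ _).const_mul x)
      ((intervalIntegrable_eval_mul _ _ _ _).const_mul x),
    intervalIntegral.integral_const_mul, intervalIntegral.integral_const_mul,
    integral_Lop_mul ht hK hφ, integral_eval_mul_derivative, h0] at hnn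
  have hxp : 0 < x := lt_of_le_of_ne hx hx0.symm
  nlinarith [mul_nonneg hx (sq_nonneg (φ.eval t₁))]

lemma neg_one_lt_eval_resolventSum_Lop (ht : t₀ < t₁) (hK : IsLegendreBasis t₀ t₁ K) (r : ℕ)
    {x : ℝ} (hx : 0 ≤ x) :
    -1 < (resolventSum (Lop t₀ t₁ r K 1) (r + 1) x).eval t₀ := by
  by_contra! hle
  have hL := natDegree_Lop_le hK r 1
  obtain ⟨y, hy, hy'⟩ := intermediate_value_Icc' hx
    (continuous_eval_resolventSum (Lop t₀ t₁ r K 1) (r + 1) t₀).continuousOn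
    ⟨hle, by rw [eval_resolventSum_zero]; norm_num⟩
  exact eval_left_ne_neg_one_of_resolvent ht hK (natDegree_resolventSum_le _ hL _ y) hy.1
    (resolventSum_eq _ hL y) hy'

lemma derivative_add_of_Gam_eq {r : ℕ} {lam : ℝ} {ψ : Polynomial ℝ}
    (hψ : Gam t₀ t₁ r K lam ψ = Lop t₀ t₁ r K 1) :
    derivative ψ + C lam * ψ = C (1 - ψ.eval t₀) * Lop t₀ t₁ r K 1 := by
  rw [Gam, Lop_eq_C_mul] at hψ
  rw [C_sub, C_1]
  linear_combination hψ

lemma eval_left_lt_one_of_Gam_eq (ht : t₀ < t₁) (hK : IsLegendreBasis t₀ t₁ K) {r : ℕ}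
    {lam : ℝ} (hlam : 0 < lam) {ψ : Polynomial ℝ}
    (hψ : Gam t₀ t₁ r K lam ψ = Lop t₀ t₁ r K 1) : ψ.eval t₀ < 1 := by
  have hpos := neg_one_lt_eval_resolventSum_Lop ht hK r (inv_nonneg.2 hlam.le)
  have hφ := resolventSum_eq _ (natDegree_Lop_le hK r 1) lam⁻¹
  set φ := resolventSum (Lop t₀ t₁ r K 1) (r + 1) lam⁻¹
  have hode := derivative_add_of_Gam_eq hψ
  set a := 1 - ψ.eval t₀ with ha
  have hC : (C lam : Polynomial ℝ) * C lam⁻¹ = 1 := by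
    rw [← C_mul, mul_inv_cancel₀ hlam.ne', C_1]
  have hzero : ψ - C a * φ = 0 := by
    refine eq_zero_of_derivative_add_C_mul hlam.ne' ?_
    rw [derivative_sub, derivative_C_mul]
    linear_combination hode - C a * C lam * hφ +
      C a * (derivative φ - Lop t₀ t₁ r K 1) * hC
  have h0 := congrArg (eval t₀) hzero
  simp only [eval_sub, eval_mul, eval_C, eval_zero] at h0
  have h1 : a * (1 + φ.eval t₀) = 1 := by linear_combination ha - h0
  have : 0 < a := pos_of_mul_pos_left (h1 ▸ one_pos) (by linarith)
  linarith

lemma integral_exp_mul_Lop {r : ℕ} {lam : ℝ} {ψ : Polynomial ℝ}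
    (hψ : Gam t₀ t₁ r K lam ψ = Lop t₀ t₁ r K 1) (t : ℝ) :
    (1 - ψ.eval t₀) * ∫ s in t₀..t, Real.exp (lam * (s - t₀)) * (Lop t₀ t₁ r K 1).eval s =
      Real.exp (lam * (t - t₀)) * ψ.eval t - ψ.eval t₀ := by
  have hd : ∀ s ∈ Set.uIcc t₀ t, HasDerivAt (fun s => Real.exp (lam * (s - t₀)) * ψ.eval s)
      ((1 - ψ.eval t₀) * (Real.exp (lam * (s - t₀)) * (Lop t₀ t₁ r K 1).eval s)) s :=
    fun s _ => by
      have h1 : HasDerivAt (fun s => lam * (s - t₀)) lam s := by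
        simpa using ((hasDerivAt_id s).sub_const t₀).const_mul lam
      have h2 := congrArg (eval s) (derivative_add_of_Gam_eq hψ)
      simp only [eval_add, eval_mul, eval_C] at h2
      refine (h1.exp.mul (ψ.hasDerivAt s)).congr_deriv ?_
      linear_combination Real.exp (lam * (s - t₀)) * h2
  rw [← intervalIntegral.integral_const_mul, integral_eq_sub_of_hasDerivAt hd]
  · simp
  · have := (Lop t₀ t₁ r K 1).continuous
    exact Continuous.intervalIntegrable (by fun_prop) _ _

end Legendre

/-- `e(t₀) = 1 - ψ(t₀) > 0` and `exp(-λ(t-t₀)) η(t) = e(t)/e(t₀)` on `I`, where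
`η(t) = 1 - ∫_{t₀}^t exp(λ(s-t₀)) L(1)(s) ds` and `e(t) = exp(-λ(t-t₀)) - ψ(t)`. -/
theorem stmt_11 (t₀ t₁ : ℝ) (ht : t₀ < t₁) (r : ℕ) (K : ℕ → Polynomial ℝ)
    (hK : IsLegendreBasis t₀ t₁ K) (lam : ℝ) (hlam : 0 < lam)
    (ψ : Polynomial ℝ) (hψdeg : ψ.natDegree ≤ r)
    (hψ : Gam t₀ t₁ r K lam ψ = Lop t₀ t₁ r K 1) :
    (errF t₀ lam ψ t₀ = 1 - ψ.eval t₀ ∧ 0 < errF t₀ lam ψ t₀) ∧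
    ∀ t ∈ Set.Ioc t₀ t₁,
      Real.exp (-lam * (t - t₀)) *
          (1 - ∫ s in t₀..t, Real.exp (lam * (s - t₀)) * (Lop t₀ t₁ r K 1).eval s)
        = errF t₀ lam ψ t / errF t₀ lam ψ t₀ := by
  have hlt := eval_left_lt_one_of_Gam_eq ht hK hlam hψ
  have h0 : errF t₀ lam ψ t₀ = 1 - ψ.eval t₀ := by simp [errF]
  have hpos : 0 < 1 - ψ.eval t₀ := by linarith
  refine ⟨⟨h0, h0 ▸ hpos⟩, fun t _ => ?_⟩
  have hint := integral_exp_mul_Lop hψ t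
  have hexp : Real.exp (-lam * (t - t₀)) * Real.exp (lam * (t - t₀)) = 1 := by
    rw [← Real.exp_add, neg_mul, neg_add_cancel, Real.exp_zero]
  rw [h0, eq_div_iff hpos.ne', errF]
  linear_combination -Real.exp (-lam * (t - t₀)) * hint - ψ.eval t * hexp
end
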